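/- Suppose the covariate X satisfies Assumption 1 and the noise ξ satisfies Assumption 2(a), and let f(β) = ρ_{Q,τ}(Y − ⟨X, β⟩) be the single-observation quantile loss with Y = ⟨X, β*⟩ + ξ. Then for any fixed β ∈ R^d: (i) E[f(β) − f(β*)] ≥ √(C_l/(2π)) ‖β − β*‖_2 − γ; and (ii) E[f(β) − f(β*)] ≥ (C_l/(12 b_0)) ‖β − β*‖_2² whenever ‖β − β*‖_2 ≤ C_u^{−1/2} γ. -/

import Mathlib

open MeasureTheory ProbabilityTheory

noncomputable section

/-- The quantile (check) loss `ρ_{Q,τ}(x) = τ x 1{x ≥ 0} + (τ−1) x 1{x < 0}`. -/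
def qloss (τ x : ℝ) : ℝ := if 0 ≤ x then τ * x else (τ - 1) * x

/-- The quadratic form `v ↦ vᵀ Σ v` of a matrix on Euclidean space. -/
def quadForm {d : ℕ} (S : Matrix (Fin d) (Fin d) ℝ) (v : EuclideanSpace ℝ (Fin d)) : ℝ :=
  dotProduct (fun i => v i) (S.mulVec fun i => v i)

lemma aux_gauss_abs (v : NNReal) :
    ∫ x, |x| ∂(gaussianReal 0 v) = Real.sqrt (2 * v / Real.pi) := by
  by_cases hv : v = 0
  · subst hv; simp
  have hv0 : (0 : ℝ) < v := by positivity
  rw [integral_gaussianReal_eq_integral_smul hv]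
  have h1 : ∀ x : ℝ, gaussianPDFReal 0 v x • |x| =
      (fun y : ℝ => (Real.sqrt (2 * Real.pi * v))⁻¹ * (y ^ (1 : ℝ) *
        Real.exp (-(2 * (v : ℝ))⁻¹ * y ^ (2 : ℝ)))) |x| := by
    intro x
    simp only [gaussianPDFReal, smul_eq_mul, Real.rpow_one, Real.rpow_two, sq_abs]
    have : -(x - 0) ^ 2 / (2 * (v : ℝ)) = -(2 * (v : ℝ))⁻¹ * x ^ 2 := by
      field_simp; ring
    rw [this]; ring
  rw [integral_congr_ae (Filter.Eventually.of_forall h1)]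
  refine (integral_comp_abs (f := fun y : ℝ => (Real.sqrt (2 * Real.pi * v))⁻¹ * (y ^ (1 : ℝ) *
        Real.exp (-(2 * (v : ℝ))⁻¹ * y ^ (2 : ℝ))))).trans ?_
  rw [integral_const_mul,
    integral_rpow_mul_exp_neg_mul_rpow (by norm_num) (by norm_num) (by positivity)]
  have e1 : (2 : ℝ) * v / Real.pi = (2 * v) ^ 2 / (2 * Real.pi * v) := by
    field_simp; 
  rw [e1, Real.sqrt_div (by positivity), Real.sqrt_sq (by positivity)]
  norm_num
  rw [Real.rpow_neg_one]
  field_simp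

lemma aux_knight (τ ξ z a1 a2 : ℝ) (ha1 : 0 ≤ a1) (ha : a1 ≤ a2) :
    -z * τ + (if ξ ≤ 0 then z else 0)
      + (if 0 < ξ ∧ ξ ≤ a1 then max (z - a1) 0 - max (z - a2) 0 else 0)
      + (if 0 < ξ ∧ ξ ≤ a2 then max (z - a2) 0 else 0)
    ≤ qloss τ (ξ + -z) - qloss τ ξ := by
  unfold qloss
  rcases max_cases (z - a1) 0 with ⟨h1, h1'⟩ | ⟨h1, h1'⟩ <;>
  rcases max_cases (z - a2) 0 with ⟨h2, h2'⟩ | ⟨h2, h2'⟩ <;>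
  rw [h1, h2] <;> split_ifs <;> grind

lemma aux_abs (τ ξ w : ℝ) :
    (τ - 1 / 2) * w + (1 / 2) * |w| - |ξ| ≤ qloss τ (ξ + w) - qloss τ ξ := by
  have h : ∀ x, qloss τ x = (τ - 1 / 2) * x + (1 / 2) * |x| := by
    intro x
    unfold qloss
    split_ifs with h
    · rw [abs_of_nonneg h]; ring
    · rw [abs_of_neg (not_le.mp h)]; ring
  rw [h, h]
  have := abs_sub (ξ + w) ξ
  simp only [add_sub_cancel_left] at this
  linarith

lemma aux_int (τ : ℝ) {Ω : Type*} [MeasurableSpace Ω] (μ : Measure Ω) (Y : Ω → ℝ)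
    (hY : Integrable Y μ) : Integrable (fun ω => qloss τ (Y ω)) μ := by
  have h : ∀ x, qloss τ x = (τ - 1 / 2) * x + (1 / 2) * |x| := by
    intro x
    unfold qloss
    split_ifs with h
    · rw [abs_of_nonneg h]; ring
    · rw [abs_of_neg (not_le.mp h)]; ring
  simp_rw [h]
  exact (hY.const_mul _).add (hY.abs.const_mul _)

lemma aux_H {H hd : ℝ → ℝ} (hder : ∀ s, HasDerivAt H (hd s) s) {c K s : ℝ}
    (hlb : ∀ s, |s| ≤ K → c ≤ hd s) (hs : 0 ≤ s) (hsK : s ≤ K) :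
    c * s ≤ H s - H 0 := by
  have := (convex_Icc (0 : ℝ) s).mul_sub_le_image_sub_of_le_deriv (f := H) (C := c)
    (fun x _ => (hder x).continuousAt.continuousWithinAt)
    (fun x _ => (hder x).differentiableAt.differentiableWithinAt)
    (by
      intro x hx
      rw [interior_Icc] at hx
      rw [(hder x).deriv]
      apply hlb
      rw [abs_of_pos hx.1]
      exact hx.2.le.trans hsK) 0 (by simp [hs]) s (by simp [hs]) hs
  simpa using this

section
variable {E Ω : Type*} [MeasurableSpace E] [MeasurableSpace Ω]

lemma aux_add4 (μ : Measure Ω) (f0 f1 f2 f3 : Ω → ℝ) (h0 : Integrable f0 μ)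
    (h1 : Integrable f1 μ) (h2 : Integrable f2 μ) (h3 : Integrable f3 μ) :
    ∫ ω, (f0 ω + f1 ω + f2 ω + f3 ω) ∂μ =
      ∫ ω, f0 ω ∂μ + ∫ ω, f1 ω ∂μ + ∫ ω, f2 ω ∂μ + ∫ ω, f3 ω ∂μ := by
  have h01 : Integrable (fun ω => f0 ω + f1 ω) μ := h0.add h1
  have h012 : Integrable (fun ω => f0 ω + f1 ω + f2 ω) μ := h01.add h2
  rw [integral_add h012 h3, integral_add h01 h2, integral_add h0 h1]

lemma aux_cond (μ : Measure Ω) [IsProbabilityMeasure μ] (X : Ω → E) (ξ : Ω → ℝ)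
    (hX : Measurable X) (hξ : Measurable ξ) (τ c s : ℝ) (hτ : 0 < τ)
    (hs : 0 ≤ s) (G : E → ℝ) (hG : ∀ x, c ≤ G x - τ)
    (h0 : ∀ B : Set E, MeasurableSet B →
      (μ {ω | X ω ∈ B ∧ ξ ω ≤ 0}).toReal = ∫ _ in B, τ ∂(Measure.map X μ))
    (h1 : ∀ B : Set E, MeasurableSet B →
      (μ {ω | X ω ∈ B ∧ ξ ω ≤ s}).toReal = ∫ x in B, G x ∂(Measure.map X μ)) :
    ENNReal.ofReal c • Measure.map X μ ≤
      Measure.map X (μ.restrict {ω | 0 < ξ ω ∧ ξ ω ≤ s}) := by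
  have : IsProbabilityMeasure (Measure.map X μ) :=
    Measure.isProbabilityMeasure_map hX.aemeasurable
  have hms : MeasurableSet {ω | 0 < ξ ω ∧ ξ ω ≤ s} :=
    (measurableSet_lt measurable_const hξ).inter (measurableSet_le hξ measurable_const)
  refine Measure.le_iff.2 fun B hB => ?_
  rw [Measure.map_apply hX hB, Measure.restrict_apply (hX hB), Measure.smul_apply, smul_eq_mul]
  have h0B := h0 B hB
  have h1B := h1 B hB
  have hm0 : MeasurableSet {ω | X ω ∈ B ∧ ξ ω ≤ 0} :=
    (hX hB).inter (measurableSet_le hξ measurable_const)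
  have hdiff : X ⁻¹' B ∩ {ω | 0 < ξ ω ∧ ξ ω ≤ s} =
      {ω | X ω ∈ B ∧ ξ ω ≤ s} \ {ω | X ω ∈ B ∧ ξ ω ≤ 0} := by
    ext ω; simp only [Set.mem_inter_iff, Set.mem_preimage, Set.mem_ofPred_eq, Set.mem_sdiff]
    constructor
    · rintro ⟨a, b, c⟩; exact ⟨⟨a, c⟩, fun h => by linarith [h.2]⟩
    · rintro ⟨⟨a, b⟩, c⟩; exact ⟨a, by by_contra h; exact c ⟨a, not_lt.mp h⟩, b⟩
  have hsub : {ω | X ω ∈ B ∧ ξ ω ≤ 0} ⊆ {ω | X ω ∈ B ∧ ξ ω ≤ s} :=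
    fun ω h => ⟨h.1, h.2.trans hs⟩
  have hreal : (μ (X ⁻¹' B ∩ {ω | 0 < ξ ω ∧ ξ ω ≤ s})).toReal =
      (μ {ω | X ω ∈ B ∧ ξ ω ≤ s}).toReal - (μ {ω | X ω ∈ B ∧ ξ ω ≤ 0}).toReal := by
    rw [hdiff]
    exact measureReal_sdiff hsub hm0
  have hle : (μ {ω | X ω ∈ B ∧ ξ ω ≤ 0}).toReal ≤ (μ {ω | X ω ∈ B ∧ ξ ω ≤ s}).toReal :=
    measureReal_mono hsub
  have hτB : ∫ _ in B, τ ∂(Measure.map X μ) = τ * (Measure.map X μ B).toReal := by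
    simp [Measure.real, mul_comm]
  by_cases hi : IntegrableOn G B (Measure.map X μ)
  · have key : c * (Measure.map X μ B).toReal ≤
        (μ (X ⁻¹' B ∩ {ω | 0 < ξ ω ∧ ξ ω ≤ s})).toReal := by
      rw [hreal, h0B, h1B, ← integral_sub hi (integrable_const _)]
      calc c * (Measure.map X μ B).toReal = ∫ _ in B, c ∂(Measure.map X μ) := by
            simp [Measure.real, mul_comm]
        _ ≤ _ := integral_mono (integrable_const _) (hi.sub (integrable_const _)) hG
    rcases le_total c 0 with hc | hc
    · simp [ENNReal.ofReal_of_nonpos hc]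
    · rw [← ENNReal.ofReal_toReal (measure_ne_top (Measure.map X μ) B),
        ← ENNReal.ofReal_mul hc, ← ENNReal.ofReal_toReal (measure_ne_top μ (X ⁻¹' B ∩ _))]
      exact ENNReal.ofReal_le_ofReal key
  · rw [integral_undef hi] at h1B
    rw [h1B, h0B, hτB] at hle
    have : (Measure.map X μ B).toReal = 0 :=
      le_antisymm (by by_contra h; nlinarith [mul_pos hτ (not_le.mp h)]) ENNReal.toReal_nonneg
    rw [ENNReal.toReal_eq_zero_iff] at this
    rcases this with h | h
    · simp [h]
    · exact absurd h (measure_ne_top _ _)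

lemma aux_cond_int (μ : Measure Ω) [IsProbabilityMeasure μ] (X : Ω → E)
    (hX : Measurable X) (A : Set Ω) (hA : MeasurableSet A) (c : ℝ) (hc : 0 ≤ c)
    (h : ENNReal.ofReal c • Measure.map X μ ≤ Measure.map X (μ.restrict A))
    (g : E → ℝ) (hg : Measurable g) (hg0 : ∀ x, 0 ≤ g x)
    (hgi : Integrable (fun ω => g (X ω)) μ) :
    c * ∫ ω, g (X ω) ∂μ ≤ ∫ ω in A, g (X ω) ∂μ := by
  have h2 : Integrable g (Measure.map X (μ.restrict A)) := by
    rw [integrable_map_measure hg.aestronglyMeasurable hX.aemeasurable]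
    exact hgi.integrableOn
  have := integral_mono_measure h (Filter.Eventually.of_forall hg0) h2
  rw [integral_smul_measure, ENNReal.toReal_ofReal hc,
    integral_map hX.aemeasurable hg.aestronglyMeasurable,
    integral_map hX.aemeasurable hg.aestronglyMeasurable] at this
  exact this

lemma aux_cond0 (μ : Measure Ω) [IsProbabilityMeasure μ] (X : Ω → E) (ξ : Ω → ℝ)
    (hX : Measurable X) (τ : ℝ) (hτ : 0 ≤ τ)
    (h0 : ∀ B : Set E, MeasurableSet B →
      (μ {ω | X ω ∈ B ∧ ξ ω ≤ 0}).toReal = ∫ _ in B, τ ∂(Measure.map X μ))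
    (g : E → ℝ) (hg : Measurable g) :
    ∫ ω in {ω | ξ ω ≤ 0}, g (X ω) ∂μ = τ * ∫ ω, g (X ω) ∂μ := by
  have : IsProbabilityMeasure (Measure.map X μ) :=
    Measure.isProbabilityMeasure_map hX.aemeasurable
  have h : Measure.map X (μ.restrict {ω | ξ ω ≤ 0}) = ENNReal.ofReal τ • Measure.map X μ := by
    ext B hB
    rw [Measure.map_apply hX hB, Measure.restrict_apply (hX hB), Measure.smul_apply, smul_eq_mul]
    have h0B := h0 B hB
    have hτB : ∫ _ in B, τ ∂(Measure.map X μ) = τ * (Measure.map X μ B).toReal := by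
      simp [Measure.real, mul_comm]
    rw [hτB] at h0B
    change μ {ω | X ω ∈ B ∧ ξ ω ≤ 0} = _
    rw [← ENNReal.ofReal_toReal (measure_ne_top (Measure.map X μ) B),
        ← ENNReal.ofReal_mul hτ, ← h0B, ENNReal.ofReal_toReal (measure_ne_top μ _)]
  rw [← integral_map hX.aemeasurable hg.aestronglyMeasurable, h, integral_smul_measure,
    ENNReal.toReal_ofReal hτ, integral_map hX.aemeasurable hg.aestronglyMeasurable]
  rfl

/-- half of the truncated first absolute moment -/
lemma aux_half (v : NNReal) (a : ℝ) (ha : 0 ≤ a) :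
    (Real.sqrt (2 * v / Real.pi) - a) / 2 ≤ ∫ x, max (x - a) 0 ∂(gaussianReal 0 v) := by
  have hid : Integrable (fun x : ℝ => x) (gaussianReal 0 v) :=
    (memLp_id_gaussianReal 1).integrable (by simp)
  have hp : Integrable (fun x : ℝ => max (x - a) 0) (gaussianReal 0 v) :=
    (hid.sub (integrable_const a)).pos_part
  have hn : Integrable (fun x : ℝ => max (-x - a) 0) (gaussianReal 0 v) :=
    (hid.neg.sub (integrable_const a)).pos_part
  have hsymm : ∫ x, max (-x - a) 0 ∂(gaussianReal 0 v) =
      ∫ x, max (x - a) 0 ∂(gaussianReal 0 v) := by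
    have h := gaussianReal_map_neg (μ := 0) (v := v)
    rw [neg_zero] at h
    conv_rhs => rw [← h]
    rw [integral_map (by fun_prop) (by fun_prop)]
  have hle : ∫ x, (|x| - a) ∂(gaussianReal 0 v) ≤
      ∫ x, (max (x - a) 0 + max (-x - a) 0) ∂(gaussianReal 0 v) := by
    refine integral_mono (hid.abs.sub (integrable_const a)) (hp.add hn) fun x => ?_
    have h1 := le_max_left (x - a) 0
    have h2 := le_max_right (x - a) 0
    have h3 := le_max_left (-x - a) 0
    have h4 := le_max_right (-x - a) 0
    rcases abs_cases x with ⟨h, _⟩ | ⟨h, _⟩ <;> simp only [h] <;> linarith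
  rw [integral_add hp hn, hsymm, integral_sub hid.abs (integrable_const a), aux_gauss_abs] at hle
  simp only [integral_const, probReal_univ, one_smul] at hle
  linarith
end

set_option maxHeartbeats 1000000 in
/-- **Lower bounds on the expected excess quantile risk of a single observation.**
Under Assumption 1 on `X` and Assumption 2(a) on the noise `ξ` (conditional CDF `H` with
`H(x)(0) = τ`, conditional density `h = H'` bounded below by `1/b₀` on
`|s| ≤ 8√(C_u/C_l) γ`, where `γ = E|ξ|`), for `f(β) = ρ_{Q,τ}(Y − ⟨X, β⟩)` with
`Y = ⟨X, β*⟩ + ξ`: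
(i)  `E[f(β) − f(β*)] ≥ √(C_l/(2π)) ‖β − β*‖ − γ`, and
(ii) `E[f(β) − f(β*)] ≥ (C_l/(12 b₀)) ‖β − β*‖²` whenever `‖β − β*‖ ≤ γ/√C_u`. -/
theorem stmt_12 {d : ℕ} {Ω : Type*} [MeasurableSpace Ω]
    (μ : Measure Ω) [IsProbabilityMeasure μ]
    (τ Cl Cu b0 γ : ℝ) (hτ : τ ∈ Set.Ioo (0 : ℝ) 1)
    (hCl : 0 < Cl) (hCu : 0 < Cu) (hb0 : 0 < b0)
    (S : Matrix (Fin d) (Fin d) ℝ) (hSsymm : S.IsSymm) (hSpd : S.PosDef)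
    (hquad : ∀ v : EuclideanSpace ℝ (Fin d),
      Cl * ‖v‖ ^ 2 ≤ quadForm S v ∧ quadForm S v ≤ Cu * ‖v‖ ^ 2)
    (X : Ω → EuclideanSpace ℝ (Fin d)) (ξ : Ω → ℝ)
    (hXmeas : Measurable X) (hξmeas : Measurable ξ)
    (hX : ∀ v : EuclideanSpace ℝ (Fin d),
      Measure.map (fun ω => (inner ℝ v (X ω) : ℝ)) μ
        = gaussianReal 0 (Real.toNNReal (quadForm S v)))
    -- conditional CDF `H` and conditional density `hdens` of `ξ` given `X`
    (H hdens : EuclideanSpace ℝ (Fin d) → ℝ → ℝ)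
    (hcond : ∀ (s : ℝ) (B : Set (EuclideanSpace ℝ (Fin d))), MeasurableSet B →
      (μ {ω | X ω ∈ B ∧ ξ ω ≤ s}).toReal = ∫ x in B, H x s ∂(Measure.map X μ))
    (hH0 : ∀ x, H x 0 = τ)
    (hHderiv : ∀ x s, HasDerivAt (H x) (hdens x s) s)
    (hγint : Integrable (fun ω => |ξ ω|) μ)
    (hγ : γ = ∫ ω, |ξ ω| ∂μ)
    (hdens_lb : ∀ x s, |s| ≤ 8 * Real.sqrt (Cu / Cl) * γ → 1 / b0 ≤ hdens x s)
    (βstar β : EuclideanSpace ℝ (Fin d)) :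
    Real.sqrt (Cl / (2 * Real.pi)) * ‖β - βstar‖ - γ ≤
      ∫ ω, (qloss τ (ξ ω + (inner ℝ (X ω) (βstar - β) : ℝ)) - qloss τ (ξ ω)) ∂μ ∧
    (‖β - βstar‖ ≤ γ / Real.sqrt Cu →
      Cl / (12 * b0) * ‖β - βstar‖ ^ 2 ≤
        ∫ ω, (qloss τ (ξ ω + (inner ℝ (X ω) (βstar - β) : ℝ)) - qloss τ (ξ ω)) ∂μ) := by
  obtain ⟨hτ0, hτ1⟩ := hτ
  set u := β - βstar with hu
  set Z : Ω → ℝ := fun ω => inner ℝ u (X ω) with hZ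
  have hw : ∀ ω, (inner ℝ (X ω) (βstar - β) : ℝ) = - Z ω := by
    intro ω
    rw [hZ]
    simp only
    rw [real_inner_comm, ← inner_neg_left, hu, neg_sub]
  simp_rw [hw]
  set v : NNReal := Real.toNNReal (quadForm S u) with hv
  have hq1 := (hquad u).1
  have hq2 := (hquad u).2
  have hvq : (v : ℝ) = quadForm S u :=
    Real.coe_toNNReal _ (le_trans (by positivity) hq1)
  have hZlaw : Measure.map Z μ = gaussianReal 0 v := hX u
  have hZm : Measurable Z := by fun_prop
  have hid : Integrable (fun x : ℝ => x) (gaussianReal 0 v) :=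
    (memLp_id_gaussianReal 1).integrable (by simp)
  have hZi : Integrable Z μ := by
    rw [← hZlaw] at hid
    exact (integrable_map_measure (by fun_prop) hZm.aemeasurable).1 hid
  have htrans : ∀ g : ℝ → ℝ, Measurable g →
      ∫ ω, g (Z ω) ∂μ = ∫ x, g x ∂(gaussianReal 0 v) := by
    intro g hg
    rw [← hZlaw, integral_map hZm.aemeasurable hg.aestronglyMeasurable]
  have hZ0 : ∫ ω, Z ω ∂μ = 0 := by
    rw [htrans (fun x => x) measurable_id, integral_id_gaussianReal]
  set m := Real.sqrt (2 * v / Real.pi) with hm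
  have hZabs : ∫ ω, |Z ω| ∂μ = m := by
    rw [htrans (fun x => |x|) (by fun_prop), aux_gauss_abs]
  have hξi : Integrable ξ μ := (integrable_norm_iff hξmeas.aestronglyMeasurable).1 hγint
  have hLi : Integrable (fun ω => qloss τ (ξ ω + - Z ω) - qloss τ (ξ ω)) μ :=
    (aux_int τ μ _ (hξi.add hZi.neg)).sub (aux_int τ μ _ hξi)
  have hpi := Real.pi_pos
  constructor
  · have h1 : ∫ ω, ((τ - 1 / 2) * (-Z ω) + (1 / 2) * |-Z ω| - |ξ ω|) ∂μ ≤
        ∫ ω, (qloss τ (ξ ω + - Z ω) - qloss τ (ξ ω)) ∂μ :=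
      integral_mono (((hZi.neg.const_mul _).add (hZi.neg.abs.const_mul _)).sub hγint) hLi
        (fun ω => aux_abs τ (ξ ω) (-Z ω))
    have h2 : ∫ ω, ((τ - 1 / 2) * (-Z ω) + (1 / 2) * |-Z ω| - |ξ ω|) ∂μ = m / 2 - γ := by
      have i1 : Integrable (fun ω => (τ - 1 / 2) * (-Z ω)) μ := hZi.neg.const_mul _
      have i2 : Integrable (fun ω => (1 / 2 : ℝ) * |-Z ω|) μ := hZi.neg.abs.const_mul _
      have i12 : Integrable (fun ω => (τ - 1 / 2) * (-Z ω) + (1 / 2 : ℝ) * |-Z ω|) μ := i1.add i2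
      rw [integral_sub i12 hγint, integral_add i1 i2, integral_const_mul,
        integral_const_mul, integral_neg, hZ0, ← hγ]
      simp only [abs_neg]
      rw [hZabs]; ring
    have h3 : Real.sqrt (Cl / (2 * Real.pi)) * ‖u‖ ≤ m / 2 := by
      rw [← Real.sqrt_sq (norm_nonneg u), ← Real.sqrt_mul (by positivity),
        le_div_iff₀ (by norm_num)]
      rw [hm]
      apply Real.le_sqrt_of_sq_le
      rw [mul_pow, Real.sq_sqrt (by positivity), hvq]
      rw [le_div_iff₀ hpi]
      have : Cl / (2 * Real.pi) * ‖u‖ ^ 2 * 2 ^ 2 * Real.pi = 2 * (Cl * ‖u‖ ^ 2) := by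
        field_simp
        try ring
      linarith
    linarith
  · intro hr
    by_cases hu0 : u = 0
    · have : ∀ ω, Z ω = 0 := fun ω => by simp [hZ, hu0]
      simp [this, hu0]
    have hun : 0 < ‖u‖ := norm_pos_iff.2 hu0
    have hCC : Cl ≤ Cu := by
      have := hq1.trans hq2
      exact le_of_mul_le_mul_right this (by positivity)
    have hsC : 0 < Real.sqrt Cu := Real.sqrt_pos.2 hCu
    have hrg : ‖u‖ * Real.sqrt Cu ≤ γ := (le_div_iff₀ hsC).1 hr
    have hm0 : 0 ≤ m := Real.sqrt_nonneg _
    have hγ0 : 0 ≤ γ := le_trans (by positivity) hrg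
    have hv0 : (0 : ℝ) ≤ v := v.2
    have hm2 : m ^ 2 = 2 * v / Real.pi := Real.sq_sqrt (by positivity)
    have hmg : m ≤ γ := by
      refine le_trans ?_ hrg
      apply Real.sqrt_le_iff.2 ⟨by positivity, ?_⟩
      rw [mul_pow, Real.sq_sqrt hCu.le, div_le_iff₀ hpi]
      have := Real.pi_gt_three
      nlinarith [sq_nonneg ‖u‖]
    have hK : m ≤ 8 * Real.sqrt (Cu / Cl) * γ := by
      have : 1 ≤ Real.sqrt (Cu / Cl) := by
        rw [Real.one_le_sqrt, one_le_div hCl]; exact hCC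
      nlinarith
    have h0 : ∀ B : Set (EuclideanSpace ℝ (Fin d)), MeasurableSet B →
        (μ {ω | X ω ∈ B ∧ ξ ω ≤ 0}).toReal = ∫ _ in B, τ ∂(Measure.map X μ) := by
      intro B hB
      rw [hcond 0 B hB]
      simp_rw [hH0]
    have hlev : ∀ s, 0 ≤ s → s ≤ m → ∀ g : ℝ → ℝ, Measurable g → (∀ x, 0 ≤ g x) →
        Integrable (fun ω => g (Z ω)) μ →
        s / b0 * ∫ ω, g (Z ω) ∂μ ≤ ∫ ω in {ω | 0 < ξ ω ∧ ξ ω ≤ s}, g (Z ω) ∂μ := by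
      intro s hs hsm g hg hg0 hgi
      refine aux_cond_int μ X hXmeas _
        ((measurableSet_lt measurable_const hξmeas).inter
          (measurableSet_le hξmeas measurable_const)) (s / b0) (by positivity)
        (aux_cond μ X ξ hXmeas hξmeas τ _ s hτ0 hs (fun x => H x s) ?_ h0 (hcond s))
        (fun x => g (inner ℝ u x)) (by fun_prop) (fun x => hg0 _) hgi
      intro x
      have := aux_H (hHderiv x) (hdens_lb x) hs (hsm.trans hK)
      rw [hH0 x] at this
      calc s / b0 = 1 / b0 * s := by ring
        _ ≤ _ := this
    have hms : ∀ s, MeasurableSet {ω | 0 < ξ ω ∧ ξ ω ≤ s} := fun s =>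
      (measurableSet_lt measurable_const hξmeas).inter (measurableSet_le hξmeas measurable_const)
    have hmn : MeasurableSet {ω | ξ ω ≤ 0} := measurableSet_le hξmeas measurable_const
    set a1 := m / 3 with ha1
    set a2 := 2 * m / 3 with ha2
    have ha10 : 0 ≤ a1 := by positivity
    have ha12 : a1 ≤ a2 := by rw [ha1, ha2]; linarith
    have hpart : ∀ a, Integrable (fun ω => max (Z ω - a) 0) μ := fun a =>
      (hZi.sub (integrable_const a)).pos_part
    set g1 : ℝ → ℝ := fun z => max (z - a1) 0 - max (z - a2) 0 with hg1
    set g2 : ℝ → ℝ := fun z => max (z - a2) 0 with hg2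
    have hg1i : Integrable (fun ω => g1 (Z ω)) μ := (hpart a1).sub (hpart a2)
    have hg2i : Integrable (fun ω => g2 (Z ω)) μ := hpart a2
    have L1 := hlev a1 ha10 (by rw [ha1]; linarith) g1 (by fun_prop)
      (fun x => sub_nonneg.2 (max_le_max (by linarith) le_rfl)) hg1i
    have L2 := hlev a2 (by positivity) (by rw [ha2]; linarith) g2 (by fun_prop)
      (fun x => le_max_right _ _) hg2i
    have L0 : ∫ ω in {ω | ξ ω ≤ 0}, Z ω ∂μ = 0 := by
      rw [hZ, aux_cond0 μ X ξ hXmeas τ hτ0.le h0 (fun x => inner ℝ u x) (by fun_prop)]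
      change τ * ∫ ω, Z ω ∂μ = 0
      rw [hZ0, mul_zero]
    have I0 : Integrable (fun ω => - Z ω * τ) μ := hZi.neg.mul_const τ
    have I1 : Integrable ({ω | ξ ω ≤ 0}.indicator Z) μ := hZi.indicator hmn
    have I2 := hg1i.indicator (hms a1)
    have I3 := hg2i.indicator (hms a2)
    have hmain : ∫ ω, (- Z ω * τ + {ω | ξ ω ≤ 0}.indicator Z ω
        + {ω | 0 < ξ ω ∧ ξ ω ≤ a1}.indicator (fun ω => g1 (Z ω)) ω
        + {ω | 0 < ξ ω ∧ ξ ω ≤ a2}.indicator (fun ω => g2 (Z ω)) ω) ∂μ ≤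
        ∫ ω, (qloss τ (ξ ω + - Z ω) - qloss τ (ξ ω)) ∂μ := by
      refine integral_mono (((I0.add I1).add I2).add I3) hLi fun ω => ?_
      have := aux_knight τ (ξ ω) (Z ω) a1 a2 ha10 ha12
      simp only [Set.indicator, Set.mem_ofPred_eq]
      exact this
    rw [aux_add4 μ _ _ _ _ I0 I1 I2 I3,
      integral_indicator hmn, integral_indicator (hms a1), integral_indicator (hms a2), L0,
      integral_mul_const, integral_neg, hZ0] at hmain
    have P1 : (m - a1) / 2 ≤ ∫ ω, max (Z ω - a1) 0 ∂μ := by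
      rw [htrans (fun x => max (x - a1) 0) (by fun_prop)]; exact aux_half v a1 ha10
    have P2 : (m - a2) / 2 ≤ ∫ ω, max (Z ω - a2) 0 ∂μ := by
      rw [htrans (fun x => max (x - a2) 0) (by fun_prop)]; exact aux_half v a2 (by positivity)
    have E1 : ∫ ω, g1 (Z ω) ∂μ = ∫ ω, max (Z ω - a1) 0 ∂μ - ∫ ω, max (Z ω - a2) 0 ∂μ :=
      integral_sub (hpart a1) (hpart a2)
    have E2 : ∫ ω, g2 (Z ω) ∂μ = ∫ ω, max (Z ω - a2) 0 ∂μ := rfl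
    rw [E1] at L1
    rw [E2] at L2
    set p1 := ∫ ω, max (Z ω - a1) 0 ∂μ
    set p2 := ∫ ω, max (Z ω - a2) 0 ∂μ
    have F : m ^ 2 / 6 / b0 ≤ a1 / b0 * (p1 - p2) + a2 / b0 * p2 := by
      have : a1 / b0 * (p1 - p2) + a2 / b0 * p2 = (m / 3 * p1 + m / 3 * p2) / b0 := by
        rw [ha1, ha2]; field_simp; ring
      rw [this]
      gcongr
      have q1 := mul_le_mul_of_nonneg_left P1 ha10
      have q2 := mul_le_mul_of_nonneg_left P2 ha10
      rw [ha1, ha2] at *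
      nlinarith
    have F2 : Cl / (12 * b0) * ‖u‖ ^ 2 ≤ m ^ 2 / 6 / b0 := by
      have : Cl / (12 * b0) * ‖u‖ ^ 2 = Cl * ‖u‖ ^ 2 / 12 / b0 := by field_simp
      rw [this, hm2, hvq]
      refine div_le_div_of_nonneg_right ?_ hb0.le
      rw [div_div, div_le_div_iff₀ (by norm_num) (by positivity)]
      have hc0 : 0 ≤ Cl * ‖u‖ ^ 2 := by positivity
      have hc1 := mul_le_mul_of_nonneg_left Real.pi_le_four hc0
      linarith
    linarith
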